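/- Let n ≥ 7, f ∈ C¹(ℝ), and let u be a W^{3,1}_loc(ℝⁿ) stable solution of div(∇u/√(1+|∇u|²)) = −f(u) in ℝⁿ which is radially symmetric with respect to the origin. If either |∇u(x)| = o(|x|^{−n/2+√(n−1)+1}) as |x| → +∞, or |∇u(x)|^{−1} = o(|x|^{−n+2√(n−1)+2}) as |x| → +∞, then u is constant. -/

import Mathlib

open MeasureTheory Metric Real Filter Asymptotics Bornology
open scoped RealInnerProductSpace Topology

noncomputable section

/-- Euclidean space `ℝⁿ`. -/
abbrev Euc (n : ℕ) := EuclideanSpace ℝ (Fin n)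

/-- `φ` is an admissible test function on `Ω`: smooth with compact support contained in `Ω`
(i.e. `φ ∈ C_c^∞(Ω)`). -/
def IsTestFun {n : ℕ} (Ω : Set (Euc n)) (φ : Euc n → ℝ) : Prop :=
  ContDiff ℝ (⊤ : ℕ∞) φ ∧ HasCompactSupport φ ∧ tsupport φ ⊆ Ω

/-- `u` is a weak solution of the mean curvature equation
`div(∇u/√(1+|∇u|²)) = -f(u)` in `Ω`:  `u ∈ W^{1,1}_loc(Ω)`, `f(u) ∈ L¹_loc(Ω)` and
`∫_Ω ∇u·∇φ/√(1+|∇u|²) = ∫_Ω f(u) φ` for every `φ ∈ C_c^∞(Ω)`. -/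
def IsWeakSolution {n : ℕ} (Ω : Set (Euc n)) (f : ℝ → ℝ) (u : Euc n → ℝ) : Prop :=
  LocallyIntegrableOn u Ω ∧
  LocallyIntegrableOn (fun x => ‖gradient u x‖) Ω ∧
  LocallyIntegrableOn (fun x => f (u x)) Ω ∧
  ∀ φ : Euc n → ℝ, IsTestFun Ω φ →
    ∫ x in Ω, ⟪gradient u x, gradient φ x⟫ / Real.sqrt (1 + ‖gradient u x‖ ^ 2)
      = ∫ x in Ω, f (u x) * φ x

/-- `u` is a stable solution of `div(∇u/√(1+|∇u|²)) = -f(u)` in `Ω`: it is a weak solution,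
`f'(u) ∈ L¹_loc(Ω)` and the second variation of the energy at `u` is nonnegative:
`∫_Ω f'(u) ξ² ≤ ∫_Ω (|∇ξ|²/√(1+|∇u|²) - (∇u·∇ξ)²/(1+|∇u|²)^{3/2})` for all `ξ ∈ C_c^∞(Ω)`. -/
def IsStableSolution {n : ℕ} (Ω : Set (Euc n)) (f : ℝ → ℝ) (u : Euc n → ℝ) : Prop :=
  IsWeakSolution Ω f u ∧
  LocallyIntegrableOn (fun x => deriv f (u x)) Ω ∧
  ∀ ξ : Euc n → ℝ, IsTestFun Ω ξ →
    ∫ x in Ω, deriv f (u x) * ξ x ^ 2 ≤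
      ∫ x in Ω, (‖gradient ξ x‖ ^ 2 / Real.sqrt (1 + ‖gradient u x‖ ^ 2)
        - ⟪gradient u x, gradient ξ x⟫ ^ 2 / (1 + ‖gradient u x‖ ^ 2) ^ ((3:ℝ)/2))

/-- A vector field `g` belongs to the Morrey space `M^p(Ω)`: there is `K > 0` with
`∫_{B_ρ(x₀) ∩ Ω} |g| ≤ K ρ^{n(1-1/p)}` for all `x₀ ∈ Ω` and `0 < ρ ≤ diam Ω`. -/
def MemMorrey {n : ℕ} (Ω : Set (Euc n)) (p : ℝ) (g : Euc n → Euc n) : Prop :=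
  ∃ K > (0:ℝ), ∀ x₀ ∈ Ω, ∀ ρ : ℝ, 0 < ρ → ρ ≤ Metric.diam Ω →
    ∫ x in Metric.ball x₀ ρ ∩ Ω, ‖g x‖ ≤ K * ρ ^ ((n : ℝ) * (1 - 1 / p))

/-- One-dimensional test functions on `(0,∞)`. -/
def Test1 (φ : ℝ → ℝ) : Prop :=
  ContDiff ℝ (⊤ : ℕ∞) φ ∧ HasCompactSupport φ ∧ tsupport φ ⊆ Set.Ioi 0

lemma Test1.zero {φ : ℝ → ℝ} (h : Test1 φ) {r : ℝ} (hr : r ≤ 0) : φ r = 0 :=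
  image_eq_zero_of_notMem_tsupport (fun h' => absurd (h.2.2 h') (not_lt.mpr hr))

lemma Test1.deriv_zero {φ : ℝ → ℝ} (h : Test1 φ) {r : ℝ} (hr : r ≤ 0) : deriv φ r = 0 :=
  image_eq_zero_of_notMem_tsupport
    (fun h' => absurd (h.2.2 (tsupport_deriv_subset h')) (not_lt.mpr hr))

lemma grad_radial {n : ℕ} (h : ℝ → ℝ) (h' : ℝ) (x : Euc n) (hx : x ≠ 0)
    (hh : HasDerivAt h h' ‖x‖) :
    gradient (fun y : Euc n => h ‖y‖) x = (h' * ‖x‖⁻¹) • x := by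
  have hn : ‖x‖ ≠ 0 := norm_ne_zero_iff.mpr hx
  have h1 : HasFDerivAt (fun y : Euc n => ‖y‖ ^ 2) (2 • (innerSL ℝ) x) x :=
    (hasStrictFDerivAt_norm_sq x).hasFDerivAt
  have h2 : HasFDerivAt (fun y : Euc n => ‖y‖) ((1 / (2 * ‖x‖)) • (2 • (innerSL ℝ) x)) x := by
    have h3 : HasDerivAt Real.sqrt (1 / (2 * Real.sqrt (‖x‖ ^ 2))) (‖x‖ ^ 2) :=
      Real.hasDerivAt_sqrt (by positivity)
    have h4 := h3.comp_hasFDerivAt x h1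
    rw [Real.sqrt_sq (norm_nonneg _)] at h4
    refine h4.congr_of_eventuallyEq (Eventually.of_forall fun y => ?_)
    simp [Real.sqrt_sq (norm_nonneg _)]
  have h5 := hh.comp_hasFDerivAt x h2
  apply HasGradientAt.gradient
  rw [hasGradientAt_iff_hasFDerivAt]
  have h6 : (InnerProductSpace.toDual ℝ (Euc n)) ((h' * ‖x‖⁻¹) • x)
      = h' • (1 / (2 * ‖x‖)) • 2 • (innerSL ℝ) x := by
    ext y
    simp
    field_simp
  rw [h6]
  exact h5

lemma testFun_lift {n : ℕ} {φ : ℝ → ℝ} (h : Test1 φ) :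
    IsTestFun (Set.univ : Set (Euc n)) (fun x => φ ‖x‖) := by
  obtain ⟨h1, h2, h3⟩ := h
  refine ⟨?_, ?_, Set.subset_univ _⟩
  · rw [contDiff_iff_contDiffAt]
    intro x
    by_cases hx : x = 0
    · subst hx
      have h0 : (0 : ℝ) ∉ tsupport φ := fun h' => lt_irrefl (0:ℝ) (h3 h')
      have h4 : φ =ᶠ[𝓝 0] 0 := notMem_tsupport_iff_eventuallyEq.mp h0
      have h5 : Tendsto (fun x : Euc n => ‖x‖) (𝓝 0) (𝓝 0) := tendsto_norm_zero
      refine ContDiffAt.congr_of_eventuallyEq (f := fun _ => (0 : ℝ)) contDiffAt_const ?_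
      exact h5.eventually h4
    · exact h1.contDiffAt.comp x (contDiffAt_norm ℝ hx)
  · obtain ⟨B, hB⟩ := h2.isCompact.isBounded.subset_closedBall 0
    refine HasCompactSupport.intro (isCompact_closedBall (0 : Euc n) B) fun x hx => ?_
    apply image_eq_zero_of_notMem_tsupport
    intro h'
    have := hB h'
    simp at this hx
    linarith

lemma grad_lift {n : ℕ} {φ : ℝ → ℝ} (h : Test1 φ) (x : Euc n) :
    gradient (fun x : Euc n => φ ‖x‖) x = (deriv φ ‖x‖ * ‖x‖⁻¹) • x := by
  by_cases hx : x = 0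
  · subst hx
    have h0 : (0 : ℝ) ∉ tsupport φ := fun h' => lt_irrefl (0:ℝ) (h.2.2 h')
    have h4 : φ =ᶠ[𝓝 0] 0 := notMem_tsupport_iff_eventuallyEq.mp h0
    have h5 : Tendsto (fun x : Euc n => ‖x‖) (𝓝 0) (𝓝 0) := tendsto_norm_zero
    have h6 : (fun x : Euc n => φ ‖x‖) =ᶠ[𝓝 0] fun _ => (0:ℝ) := h5.eventually h4
    rw [h6.gradient_eq]
    simp
  · exact grad_radial _ _ _ hx ((h.1.differentiable (by simp)).differentiableAt.hasDerivAt)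

lemma vol_pos (n : ℕ) : 0 < (volume : Measure (Euc n)).real (Metric.ball 0 1) :=
  ENNReal.toReal_pos (Metric.measure_ball_pos volume _ one_pos).ne' measure_ball_lt_top.ne

lemma weak_1d {k n : ℕ} (hn : n = k + 3) (f : ℝ → ℝ) (G : ℝ → ℝ) (hG : Differentiable ℝ G)
    (hu : IsStableSolution (Set.univ : Set (Euc n)) f (fun x => G ‖x‖))
    (φ : ℝ → ℝ) (hφ : Test1 φ) :
    ∫ r, r ^ (k + 2) * (deriv G r * deriv φ r / Real.sqrt (1 + deriv G r ^ 2))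
      = ∫ r, r ^ (k + 2) * (f (G r) * φ r) := by
  have hnt : Nontrivial (Euc n) := by
    subst hn; infer_instance
  have h := hu.1.2.2.2 _ (testFun_lift hφ)
  have e1 : ∀ x : Euc n, ⟪gradient (fun x : Euc n => G ‖x‖) x, gradient (fun x : Euc n => φ ‖x‖) x⟫
      / Real.sqrt (1 + ‖gradient (fun x : Euc n => G ‖x‖) x‖ ^ 2)
      = (fun r => deriv G r * deriv φ r / Real.sqrt (1 + deriv G r ^ 2)) ‖x‖ := by
    intro x
    rw [grad_lift hφ]
    by_cases hx : x = 0
    · subst hx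
      simp [hφ.deriv_zero le_rfl]
    · rw [grad_radial _ _ _ hx (hG _).hasDerivAt]
      have hn : ‖x‖ ≠ 0 := norm_ne_zero_iff.mpr hx
      simp only [inner_smul_left, inner_smul_right, real_inner_self_eq_norm_sq, norm_smul]
      congr 1
      · simp; field_simp
      · congr 2
        simp [hn]
  have e2 : ∀ x : Euc n, f (G ‖x‖) * φ ‖x‖ = (fun r => f (G r) * φ r) ‖x‖ := fun x => rfl
  simp only [Measure.restrict_univ] at h
  rw [integral_congr_ae (Eventually.of_forall e1), integral_congr_ae (Eventually.of_forall e2),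
    integral_fun_norm_addHaar volume (fun r => deriv G r * deriv φ r / Real.sqrt (1 + deriv G r ^ 2)),
    integral_fun_norm_addHaar volume (fun r => f (G r) * φ r)] at h
  have hc : (volume : Measure (Euc n)).real (Metric.ball 0 1) ≠ 0 := (vol_pos n).ne'
  have hd : Module.finrank ℝ (Euc n) ≠ 0 := by simp; omega
  simp only [nsmul_eq_mul, smul_eq_mul] at h
  have h2 := mul_left_cancel₀ hc (mul_left_cancel₀ (Nat.cast_ne_zero.mpr hd) h)
  have hd2 : Module.finrank ℝ (Euc n) - 1 = k + 2 := by simp; omega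
  rw [hd2] at h2
  rw [setIntegral_eq_integral_of_forall_compl_eq_zero, setIntegral_eq_integral_of_forall_compl_eq_zero] at h2
  · exact h2
  · intro r hr
    simp [hφ.zero (not_lt.mp hr)]
  · intro r hr
    simp [hφ.deriv_zero (not_lt.mp hr)]

lemma stab_1d {k n : ℕ} (hn : n = k + 3) (f : ℝ → ℝ) (G : ℝ → ℝ) (hG : Differentiable ℝ G)
    (hu : IsStableSolution (Set.univ : Set (Euc n)) f (fun x => G ‖x‖))
    (φ : ℝ → ℝ) (hφ : Test1 φ) :
    ∫ r, r ^ (k + 2) * (deriv f (G r) * φ r ^ 2)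
      ≤ ∫ r, r ^ (k + 2) * (deriv φ r ^ 2 / Real.sqrt (1 + deriv G r ^ 2) ^ 3) := by
  have hnt : Nontrivial (Euc n) := by
    subst hn; infer_instance
  have h := hu.2.2 _ (testFun_lift hφ)
  have e1 : ∀ x : Euc n, ‖gradient (fun x : Euc n => φ ‖x‖) x‖ ^ 2
      / Real.sqrt (1 + ‖gradient (fun x : Euc n => G ‖x‖) x‖ ^ 2)
      - ⟪gradient (fun x : Euc n => G ‖x‖) x, gradient (fun x : Euc n => φ ‖x‖) x⟫ ^ 2
        / (1 + ‖gradient (fun x : Euc n => G ‖x‖) x‖ ^ 2) ^ ((3:ℝ)/2)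
      = (fun r => deriv φ r ^ 2 / Real.sqrt (1 + deriv G r ^ 2) ^ 3) ‖x‖ := by
    intro x
    rw [grad_lift hφ]
    by_cases hx : x = 0
    · subst hx
      simp [hφ.deriv_zero le_rfl]
    · rw [grad_radial _ _ _ hx (hG _).hasDerivAt]
      have hn : ‖x‖ ≠ 0 := norm_ne_zero_iff.mpr hx
      have a1 : ∀ c : ℝ, ‖(c * ‖x‖⁻¹) • x‖ ^ 2 = c ^ 2 := by
        intro c; simp [norm_smul, hn]
      have a2 : ∀ c d : ℝ, ⟪(c * ‖x‖⁻¹) • x, (d * ‖x‖⁻¹) • x⟫ = c * d := by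
        intro c d
        simp only [inner_smul_left, inner_smul_right, real_inner_self_eq_norm_sq]
        simp; field_simp
      rw [a1, a1, a2]
      have hp : 0 < 1 + deriv G ‖x‖ ^ 2 := by positivity
      have a3 : (1 + deriv G ‖x‖ ^ 2) ^ ((3:ℝ)/2) = Real.sqrt (1 + deriv G ‖x‖ ^ 2) ^ 3 := by
        rw [Real.sqrt_eq_rpow, ← Real.rpow_natCast ((1 + deriv G ‖x‖ ^ 2) ^ _) 3, ← Real.rpow_mul hp.le]
        norm_num
      rw [a3]
      have hq : 0 < Real.sqrt (1 + deriv G ‖x‖ ^ 2) := Real.sqrt_pos.mpr hp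
      have hq2 := Real.sq_sqrt hp.le
      set q := Real.sqrt (1 + deriv G ‖x‖ ^ 2)
      simp only
      field_simp
      rw [hq2]; ring
  have e2 : ∀ x : Euc n, deriv f (G ‖x‖) * φ ‖x‖ ^ 2 = (fun r => deriv f (G r) * φ r ^ 2) ‖x‖ :=
    fun x => rfl
  simp only [Measure.restrict_univ] at h
  rw [integral_congr_ae (Eventually.of_forall e1), integral_congr_ae (Eventually.of_forall e2),
    integral_fun_norm_addHaar volume (fun r => deriv φ r ^ 2 / Real.sqrt (1 + deriv G r ^ 2) ^ 3),
    integral_fun_norm_addHaar volume (fun r => deriv f (G r) * φ r ^ 2)] at h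
  have hc : 0 < (volume : Measure (Euc n)).real (Metric.ball 0 1) := vol_pos n
  have hd : 0 < Module.finrank ℝ (Euc n) := by simp; omega
  simp only [nsmul_eq_mul, smul_eq_mul] at h
  have h2 := le_of_mul_le_mul_left (le_of_mul_le_mul_left h (Nat.cast_pos.mpr hd)) hc
  have hd2 : Module.finrank ℝ (Euc n) - 1 = k + 2 := by simp; omega
  rw [hd2] at h2
  rw [setIntegral_eq_integral_of_forall_compl_eq_zero, setIntegral_eq_integral_of_forall_compl_eq_zero] at h2
  · exact h2
  · intro r hr
    simp [hφ.deriv_zero (not_lt.mp hr)]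
  · intro r hr
    simp [hφ.zero (not_lt.mp hr)]

lemma Test1.drv {φ : ℝ → ℝ} (h : Test1 φ) : Test1 (deriv φ) :=
  ⟨(contDiff_infty_iff_deriv.mp h.1).2, h.2.1.deriv, tsupport_deriv_subset.trans h.2.2⟩

lemma Test1.cont {φ : ℝ → ℝ} (h : Test1 φ) : Continuous φ := h.1.continuous

lemma Test1.hasDerivAt {φ : ℝ → ℝ} (h : Test1 φ) (r : ℝ) : HasDerivAt φ (deriv φ r) r :=
  (h.1.differentiable (by simp)).differentiableAt.hasDerivAt

/-- a continuous function vanishing wherever a test function and its derivative do is integrable -/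
lemma Test1.integrable {φ F : ℝ → ℝ} (h : Test1 φ) (hF : Continuous F)
    (h0 : ∀ r, φ r = 0 → deriv φ r = 0 → F r = 0) : Integrable F := by
  apply hF.integrable_of_hasCompactSupport
  refine HasCompactSupport.intro h.2.1 fun r hr => h0 r (image_eq_zero_of_notMem_tsupport hr) ?_
  exact image_eq_zero_of_notMem_tsupport (fun h' => hr (tsupport_deriv_subset h'))

lemma hasDerivAt_P {v : ℝ → ℝ} {v' r : ℝ} (hv : HasDerivAt v v' r) :
    HasDerivAt (fun r => v r / Real.sqrt (1 + v r ^ 2)) (v' / Real.sqrt (1 + v r ^ 2) ^ 3) r := by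
  have hp : 0 < 1 + v r ^ 2 := by positivity
  have hq : 0 < Real.sqrt (1 + v r ^ 2) := Real.sqrt_pos.mpr hp
  have hq2 := Real.sq_sqrt hp.le
  have h1 : HasDerivAt (fun r => 1 + v r ^ 2) (2 * v r * v') r := by
    have := (hv.pow 2).const_add 1
    simpa using this
  have h2 := hv.div (h1.sqrt hp.ne') hq.ne'
  refine h2.congr_deriv ?_
  generalize Real.sqrt (1 + v r ^ 2) = q at *
  field_simp
  rw [hq2]; ring

lemma ode_1d (k : ℕ) (f G : ℝ → ℝ) (hf : Continuous f) (hG : ContDiff ℝ 2 G)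
    (hweak : ∀ φ, Test1 φ →
      ∫ r, r ^ (k + 2) * (deriv G r * deriv φ r / Real.sqrt (1 + deriv G r ^ 2))
      = ∫ r, r ^ (k + 2) * (f (G r) * φ r)) :
    ∀ r > 0, r * (deriv (deriv G) r / Real.sqrt (1 + deriv G r ^ 2) ^ 3)
      + (k + 2) * (deriv G r / Real.sqrt (1 + deriv G r ^ 2)) = - r * f (G r) := by
  have hv : ContDiff ℝ 1 (deriv G) := by
    have := (contDiff_succ_iff_deriv (n := 1)).mp (by simpa [one_add_one_eq_two] using hG)
    exact this.2.2
  have hGc : Continuous G := hG.continuous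
  set v := deriv G with hvdef
  have hvc : Continuous v := hv.continuous
  have hv'c : Continuous (deriv v) := hv.continuous_deriv le_rfl
  have hvd : ∀ r, HasDerivAt v (deriv v r) r := fun r =>
    (hv.differentiable (by simp)).differentiableAt.hasDerivAt
  have hqne : ∀ r, Real.sqrt (1 + v r ^ 2) ≠ 0 := fun r =>
    (Real.sqrt_pos.mpr (by positivity)).ne'
  have hqc : Continuous fun r => Real.sqrt (1 + v r ^ 2) := by fun_prop
  have hPc : Continuous fun r => v r / Real.sqrt (1 + v r ^ 2) := hvc.div hqc hqne
  have hP'c : Continuous fun r => deriv v r / Real.sqrt (1 + v r ^ 2) ^ 3 :=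
    hv'c.div (hqc.pow 3) (fun r => pow_ne_zero _ (hqne r))
  set P := fun r => v r / Real.sqrt (1 + v r ^ 2) with hP
  set P' := fun r => deriv v r / Real.sqrt (1 + v r ^ 2) ^ 3 with hP'
  let E : ℝ → ℝ := fun r => (k + 2) * r ^ (k + 1) * P r + r ^ (k + 2) * P' r + r ^ (k + 2) * f (G r)
  have hEc : Continuous E := by
    simp only [E]; fun_prop
  have hE : ∀ φ, Test1 φ → ∫ r, φ r • E r = 0 := by
    intro φ hφ
    have hφc := hφ.cont
    have hφ'c := hφ.drv.cont
    have h1 := hweak φ hφ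
    have hd : ∀ r, HasDerivAt (fun r => r ^ (k + 2) * P r * φ r)
        (((k + 2) * r ^ (k + 1) * P r + r ^ (k + 2) * P' r) * φ r + r ^ (k + 2) * P r * deriv φ r) r := by
      intro r
      have := (((hasDerivAt_pow (k + 2) r).mul (hasDerivAt_P (hvd r))).mul (hφ.hasDerivAt r))
      refine this.congr_deriv ?_
      simp [hP, hP']
    have h2 := integral_eq_zero_of_hasDerivAt_of_integrable hd
      (hφ.integrable (by fun_prop) (fun r h1 h2 => by simp [h1, h2]))
      (hφ.integrable (by fun_prop) (fun r h1 h2 => by simp [h1]))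
    rw [integral_add (hφ.integrable (by fun_prop) (fun r h1 h2 => by simp [h1]))
      (hφ.integrable (by fun_prop) (fun r h1 h2 => by simp [h2]))] at h2
    have h3 : ∫ r, r ^ (k + 2) * P r * deriv φ r
        = ∫ r, r ^ (k + 2) * (v r * deriv φ r / Real.sqrt (1 + v r ^ 2)) := by
      congr 1; ext r; simp only [hP]; ring
    rw [h3, h1, ← integral_add (hφ.integrable (by fun_prop) (fun r h1 h2 => by simp [h1]))
      (hφ.integrable (by fun_prop) (fun r h1 h2 => by simp [h1]))] at h2
    rw [← h2]
    congr 1; ext r; simp only [E, smul_eq_mul]; ring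
  have hae := isOpen_Ioi.ae_eq_zero_of_integral_contDiff_smul_eq_zero (μ := volume) (U := Set.Ioi (0:ℝ))
    (hEc.locallyIntegrable.locallyIntegrableOn _) (fun φ h1 h2 h3 => hE φ ⟨h1, h2, h3⟩)
  have hz : Set.EqOn E (fun _ => 0) (Set.Ioi 0) := by
    refine Measure.eqOn_open_of_ae_eq (μ := volume) ?_ isOpen_Ioi hEc.continuousOn continuousOn_const
    rw [EventuallyEq, ae_restrict_iff' measurableSet_Ioi]
    exact hae
  intro r hr
  have h1 := hz hr
  simp only [E] at h1
  have h2 : r ^ (k + 1) * (r * P' r + (k + 2) * P r + r * f (G r)) = 0 := by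
    rw [← h1]; ring
  have h3 := (mul_eq_zero.mp h2).resolve_left (pow_ne_zero _ hr.ne')
  simp only [hP, hP'] at h3
  linarith

lemma approx_C1 (v : ℝ → ℝ) (hv : ContDiff ℝ 1 v) (B : ℝ) (hB : 0 ≤ B) (ε : ℝ) (hε : 0 < ε) :
    ∃ p : ℝ → ℝ, ContDiff ℝ (⊤ : ℕ∞) p ∧
      ∀ r ∈ Set.Icc (-B) B, |p r - v r| ≤ ε ∧ |deriv p r - deriv v r| ≤ ε := by
  have hv'c : Continuous (deriv v) := hv.continuous_deriv le_rfl
  have hvd : Differentiable ℝ v := hv.differentiable (by simp)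
  have hpos : 0 < ε / (2 * B + 1) := by positivity
  obtain ⟨Q, hQ⟩ := exists_polynomial_near_of_continuousOn (-B) B (deriv v) hv'c.continuousOn
    (ε / (2 * B + 1)) hpos
  have hQc : Continuous fun x => Q.eval x := Q.continuous
  have hQs : ContDiff ℝ (⊤ : ℕ∞) fun x => Q.eval x := by
    have := Polynomial.contDiff_aeval (𝕜 := ℝ) Q (⊤ : ℕ∞)
    simp only [Polynomial.coe_aeval_eq_eval] at this
    exact this
  let p : ℝ → ℝ := fun r => v (-B) + ∫ t in (-B)..r, Q.eval t
  have hp : ∀ r, HasDerivAt p (Q.eval r) r := fun r =>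
    (intervalIntegral.integral_hasDerivAt_right (hQc.intervalIntegrable _ _)
      (hQc.stronglyMeasurableAtFilter _ _) hQc.continuousAt).const_add _
  have hp' : deriv p = fun r => Q.eval r := funext fun r => (hp r).deriv
  have hle : ε / (2 * B + 1) ≤ ε := div_le_self hε.le (by linarith)
  refine ⟨p, ?_, fun r hr => ⟨?_, ?_⟩⟩
  · rw [contDiff_infty_iff_deriv, hp']
    exact ⟨fun r => (hp r).differentiableAt, hQs⟩
  · have hd : ∀ r, HasDerivAt (fun r => p r - v r) (Q.eval r - deriv v r) r := fun r =>
      (hp r).sub (hvd r).hasDerivAt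
    have := Convex.norm_image_sub_le_of_norm_deriv_le (f := fun r => p r - v r)
      (s := Set.Icc (-B) B) (x := -B) (y := r) (C := ε / (2 * B + 1))
      (fun r _ => (hd r).differentiableAt)
      (fun r hr => by rw [(hd r).deriv]; exact (hQ r hr).le) (convex_Icc _ _)
      (Set.left_mem_Icc.mpr (by linarith)) hr
    have h0 : p (-B) - v (-B) = 0 := by simp [p]
    rw [h0, sub_zero, Real.norm_eq_abs, Real.norm_eq_abs] at this
    refine this.trans ?_
    have h1 : |r - -B| ≤ 2 * B + 1 := by
      rw [abs_of_nonneg] <;> linarith [hr.1, hr.2]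
    calc ε / (2 * B + 1) * |r - -B| ≤ ε / (2 * B + 1) * (2 * B + 1) := by gcongr
      _ = ε := by field_simp
  · rw [hp']
    exact (hQ r hr).le.trans hle

lemma stab_C1 (k : ℕ) (c W v η : ℝ → ℝ) (hc : Continuous c) (hW : Continuous W)
    (hv : ContDiff ℝ 1 v) (hη : Test1 η)
    (hstab : ∀ φ, Test1 φ →
      ∫ r, r ^ (k + 2) * (c r * φ r ^ 2) ≤ ∫ r, r ^ (k + 2) * (deriv φ r ^ 2 * W r)) :
    ∫ r, r ^ (k + 2) * (c r * (v r * η r) ^ 2)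
      ≤ ∫ r, r ^ (k + 2) * ((deriv v r * η r + v r * deriv η r) ^ 2 * W r) := by
  have hηc := hη.cont
  have hη'c := hη.drv.cont
  have hvc := hv.continuous
  have hv'c : Continuous (deriv v) := hv.continuous_deriv le_rfl
  obtain ⟨B, hB⟩ := hη.2.1.isCompact.isBounded.subset_closedBall 0
  have hsupp : ∀ r, r ∉ Set.Icc (-|B|) |B| → η r = 0 ∧ deriv η r = 0 := by
    intro r hr
    have hr' : r ∉ tsupport η := by
      intro h
      have := hB h
      apply hr
      rw [mem_closedBall_zero_iff, Real.norm_eq_abs] at this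
      exact abs_le.mp (this.trans (le_abs_self B))
    exact ⟨image_eq_zero_of_notMem_tsupport hr',
      image_eq_zero_of_notMem_tsupport (fun h' => hr' (tsupport_deriv_subset h'))⟩
  have hpos : ∀ j : ℕ, (0:ℝ) < 1 / ((j : ℝ) + 1) := fun j => by positivity
  choose p hp1 hp2 using fun j : ℕ => approx_C1 v hv |B| (abs_nonneg _) _ (hpos j)
  have hlim : Tendsto (fun j : ℕ => (1:ℝ) / ((j : ℝ) + 1)) atTop (𝓝 0) :=
    tendsto_one_div_add_atTop_nhds_zero_nat
  have hT : ∀ j, Test1 (fun r => p j r * η r) := fun j =>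
    ⟨(hp1 j).mul hη.1, hη.2.1.mul_left, (tsupport_mul_subset_right).trans hη.2.2⟩
  have hpd : ∀ j r, HasDerivAt (p j) (deriv (p j) r) r := fun j r =>
    ((hp1 j).differentiable (by simp)).differentiableAt.hasDerivAt
  have hder : ∀ j r, deriv (fun r => p j r * η r) r = deriv (p j) r * η r + p j r * deriv η r :=
    fun j r => ((hpd j r).mul (hη.hasDerivAt r)).deriv
  have hpt : ∀ r ∈ Set.Icc (-|B|) |B|, Tendsto (fun j => p j r) atTop (𝓝 (v r)) := by
    intro r hr
    rw [tendsto_iff_dist_tendsto_zero]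
    exact squeeze_zero (fun _ => dist_nonneg) (fun j => (hp2 j r hr).1) hlim
  have hpt' : ∀ r ∈ Set.Icc (-|B|) |B|, Tendsto (fun j => deriv (p j) r) atTop (𝓝 (deriv v r)) := by
    intro r hr
    rw [tendsto_iff_dist_tendsto_zero]
    exact squeeze_zero (fun _ => dist_nonneg) (fun j => (hp2 j r hr).2) hlim
  have hone : ∀ j : ℕ, (1:ℝ) / ((j : ℝ) + 1) ≤ 1 := fun j => by
    rw [div_le_one (by positivity)]; linarith [(Nat.cast_nonneg j : (0:ℝ) ≤ j)]
  have hb : ∀ j, ∀ r ∈ Set.Icc (-|B|) |B|, |p j r| ≤ |v r| + 1 := by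
    intro j r hr
    have h1 := (hp2 j r hr).1.trans (hone j)
    have h2 := abs_add_le (p j r - v r) (v r)
    rw [sub_add_cancel] at h2
    linarith
  have hb' : ∀ j, ∀ r ∈ Set.Icc (-|B|) |B|, |deriv (p j) r| ≤ |deriv v r| + 1 := by
    intro j r hr
    have h1 := (hp2 j r hr).2.trans (hone j)
    have h2 := abs_add_le (deriv (p j) r - deriv v r) (deriv v r)
    rw [sub_add_cancel] at h2
    linarith
  have hpc : ∀ j, Continuous (p j) := fun j => (hp1 j).continuous
  have hpc' : ∀ j, Continuous (deriv (p j)) := fun j =>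
    (contDiff_infty_iff_deriv.mp (hp1 j)).2.continuous
  refine le_of_tendsto_of_tendsto' (b := atTop)
    (f := fun j : ℕ => ∫ r, r ^ (k + 2) * (c r * (p j r * η r) ^ 2))
    (g := fun j : ℕ => ∫ r, r ^ (k + 2) * ((deriv (p j) r * η r + p j r * deriv η r) ^ 2 * W r))
    ?_ ?_ ?_
  · refine tendsto_integral_of_dominated_convergence
      (fun r => |r| ^ (k + 2) * (|c r| * ((|v r| + 1) * |η r|) ^ 2)) ?_ ?_ ?_ ?_
    · intro j
      have := hpc j
      exact Continuous.aestronglyMeasurable (by fun_prop)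
    · exact hη.integrable (by fun_prop) (fun r h1 h2 => by simp [h1])
    · intro j
      refine Eventually.of_forall fun r => ?_
      by_cases hr : r ∈ Set.Icc (-|B|) |B|
      · rw [Real.norm_eq_abs, abs_mul, abs_mul, abs_pow, abs_pow, abs_mul]
        have := hb j r hr
        gcongr
      · simp [(hsupp r hr).1]
    · refine Eventually.of_forall fun r => ?_
      by_cases hr : r ∈ Set.Icc (-|B|) |B|
      · exact ((((hpt r hr).mul_const _).pow 2).const_mul _).const_mul _
      · simp [(hsupp r hr).1]
  · refine tendsto_integral_of_dominated_convergence
      (fun r => |r| ^ (k + 2) * (((|deriv v r| + 1) * |η r| + (|v r| + 1) * |deriv η r|) ^ 2 * |W r|))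
      ?_ ?_ ?_ ?_
    · intro j
      have := hpc j
      have := hpc' j
      exact Continuous.aestronglyMeasurable (by fun_prop)
    · exact hη.integrable (by fun_prop) (fun r h1 h2 => by simp [h1, h2])
    · intro j
      refine Eventually.of_forall fun r => ?_
      by_cases hr : r ∈ Set.Icc (-|B|) |B|
      · rw [Real.norm_eq_abs, abs_mul, abs_mul, abs_pow, abs_pow]
        have h1 := hb j r hr
        have h2 := hb' j r hr
        have h3 : |deriv (p j) r * η r + p j r * deriv η r|
            ≤ (|deriv v r| + 1) * |η r| + (|v r| + 1) * |deriv η r| := by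
          refine (abs_add_le _ _).trans ?_
          rw [abs_mul, abs_mul]
          gcongr
        gcongr
      · simp [(hsupp r hr).1, (hsupp r hr).2]
    · refine Eventually.of_forall fun r => ?_
      by_cases hr : r ∈ Set.Icc (-|B|) |B|
      · exact (((((hpt' r hr).mul_const _).add ((hpt r hr).mul_const _)).pow 2).mul_const _).const_mul _
      · simp [(hsupp r hr).1, (hsupp r hr).2]
  · intro j
    have := hstab _ (hT j)
    simp only [hder] at this
    exact this

/-- The key one-dimensional inequality. -/
lemma key_1d (k : ℕ) (f G : ℝ → ℝ) (hf : ContDiff ℝ 1 f) (hG : ContDiff ℝ 2 G)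
    (hweak : ∀ φ, Test1 φ →
      ∫ r, r ^ (k + 2) * (deriv G r * deriv φ r / Real.sqrt (1 + deriv G r ^ 2))
      = ∫ r, r ^ (k + 2) * (f (G r) * φ r))
    (hstab : ∀ φ, Test1 φ →
      ∫ r, r ^ (k + 2) * (deriv f (G r) * φ r ^ 2)
      ≤ ∫ r, r ^ (k + 2) * (deriv φ r ^ 2 / Real.sqrt (1 + deriv G r ^ 2) ^ 3))
    (η : ℝ → ℝ) (hη : Test1 η) :
    Integrable (fun r => (k + 2) * r ^ k * (deriv G r ^ 2 / Real.sqrt (1 + deriv G r ^ 2)) * η r ^ 2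
      - r ^ (k + 2) * (deriv G r ^ 2 / Real.sqrt (1 + deriv G r ^ 2) ^ 3) * deriv η r ^ 2) ∧
    ∫ r, ((k + 2) * r ^ k * (deriv G r ^ 2 / Real.sqrt (1 + deriv G r ^ 2)) * η r ^ 2
      - r ^ (k + 2) * (deriv G r ^ 2 / Real.sqrt (1 + deriv G r ^ 2) ^ 3) * deriv η r ^ 2) ≤ 0 := by
  have hode := ode_1d k f G hf.continuous hG hweak
  have hv : ContDiff ℝ 1 (deriv G) := by
    have := (contDiff_succ_iff_deriv (n := 1)).mp (by simpa [one_add_one_eq_two] using hG)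
    exact this.2.2
  have hGc : Continuous G := hG.continuous
  have hGd : ∀ r, HasDerivAt G (deriv G r) r := fun r =>
    (hG.differentiable (by simp)).differentiableAt.hasDerivAt
  have hfd : ∀ r, HasDerivAt f (deriv f r) r := fun r =>
    (hf.differentiable (by simp)).differentiableAt.hasDerivAt
  have hfc := hf.continuous
  have hf'c : Continuous (deriv f) := hf.continuous_deriv le_rfl
  set v := deriv G with hvdef
  have hvc : Continuous v := hv.continuous
  have hv'c : Continuous (deriv v) := hv.continuous_deriv le_rfl
  have hvd : ∀ r, HasDerivAt v (deriv v r) r := fun r =>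
    (hv.differentiable (by simp)).differentiableAt.hasDerivAt
  have hqne : ∀ r, Real.sqrt (1 + v r ^ 2) ≠ 0 := fun r =>
    (Real.sqrt_pos.mpr (by positivity)).ne'
  have hqc : Continuous fun r => Real.sqrt (1 + v r ^ 2) := by fun_prop
  have hPd : ∀ r, HasDerivAt (fun r => v r / Real.sqrt (1 + v r ^ 2))
    (deriv v r / Real.sqrt (1 + v r ^ 2) ^ 3) r := fun r => hasDerivAt_P (hvd r)
  set q := fun r => Real.sqrt (1 + v r ^ 2) with hq
  have hqi : Continuous fun r => (q r)⁻¹ := hqc.inv₀ hqne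
  have hηc := hη.cont
  have hη'c := hη.drv.cont
  -- stability with `ξ = v η`
  have h1 := stab_C1 k (fun r => deriv f (G r)) (fun r => (q r)⁻¹ ^ 3) v η (by fun_prop)
    (by fun_prop) hv hη (fun φ hφ => by
      have := hstab φ hφ
      simpa only [hq, inv_pow, ← div_eq_mul_inv] using this)
  -- integration by parts
  let N : ℝ → ℝ := fun r => - (r ^ (k + 2) * f (G r)) - (k + 2) * r ^ (k + 1) * (v r / q r)
  let N' : ℝ → ℝ := fun r => - ((k + 2) * r ^ (k + 1) * f (G r) + r ^ (k + 2) * (deriv f (G r) * v r))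
    - ((k + 2) * ((k + 1) * r ^ k) * (v r / q r) + (k + 2) * r ^ (k + 1) * (deriv v r / q r ^ 3))
  have hNd : ∀ r, HasDerivAt N (N' r) r := by
    intro r
    have a1 := ((hasDerivAt_pow (k + 2) r).mul ((hfd (G r)).comp r (hGd r))).neg
    have a2 := ((hasDerivAt_pow (k + 1) r).const_mul ((k:ℝ) + 2)).mul (hPd r)
    refine (a1.sub a2).congr_deriv ?_
    simp [N', hq]
  have hNc : Continuous N := by simp only [N, div_eq_mul_inv]; fun_prop
  have hN'c : Continuous N' := by
    simp only [N', div_eq_mul_inv, ← inv_pow]; fun_prop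
  have hd : ∀ r, HasDerivAt (fun r => N r * v r * η r ^ 2)
      (N' r * v r * η r ^ 2 + N r * (deriv v r * η r ^ 2 + v r * (2 * η r * deriv η r))) r := by
    intro r
    have := ((hNd r).mul (hvd r)).mul ((hη.hasDerivAt r).pow 2)
    refine this.congr_deriv ?_
    simp; ring
  have h2 := integral_eq_zero_of_hasDerivAt_of_integrable hd
      (hη.integrable (by fun_prop) (fun r h1 h2 => by simp [h1]))
      (hη.integrable (by fun_prop) (fun r h1 h2 => by simp [h1]))
  have hI1 : Integrable (fun r => r ^ (k + 2) * (deriv f (G r) * (v r * η r) ^ 2)) :=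
    hη.integrable (by fun_prop) (fun r h1 h2 => by simp [h1])
  have hI2 : Integrable (fun r => r ^ (k + 2) * ((deriv v r * η r + v r * deriv η r) ^ 2 * (q r)⁻¹ ^ 3)) :=
    hη.integrable (by fun_prop) (fun r h1 h2 => by simp [h1, h2])
  have hI3 : Integrable (fun r => N' r * v r * η r ^ 2
      + N r * (deriv v r * η r ^ 2 + v r * (2 * η r * deriv η r))) :=
    hη.integrable (by fun_prop) (fun r h1 h2 => by simp [h1])
  have hI4 : Integrable (fun r => r ^ (k + 2) * (deriv f (G r) * (v r * η r) ^ 2)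
        - r ^ (k + 2) * ((deriv v r * η r + v r * deriv η r) ^ 2 * (q r)⁻¹ ^ 3)) := hI1.sub hI2
  have hkey : ∀ r, (k + 2) * r ^ k * (v r ^ 2 / q r) * η r ^ 2
      - r ^ (k + 2) * (v r ^ 2 / q r ^ 3) * deriv η r ^ 2
      = (N' r * v r * η r ^ 2 + N r * (deriv v r * η r ^ 2 + v r * (2 * η r * deriv η r)))
        + (r ^ (k + 2) * (deriv f (G r) * (v r * η r) ^ 2)
        - r ^ (k + 2) * ((deriv v r * η r + v r * deriv η r) ^ 2 * (q r)⁻¹ ^ 3)) := by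
    intro r
    rcases le_or_gt r 0 with hr | hr
    · simp [hη.zero hr, hη.deriv_zero hr]
    · have ho := hode r hr
      simp only [N, N', div_eq_mul_inv, ← inv_pow] at ho ⊢
      change r * (deriv v r * (q r)⁻¹ ^ 3) + (k + 2) * (v r * (q r)⁻¹) = - r * f (G r) at ho
      generalize (q r)⁻¹ = Z at *
      generalize f (G r) = F at *
      generalize deriv f (G r) = F' at *
      have hF : F = - (deriv v r * Z ^ 3) - (k + 2) * (v r * Z) / r := by
        field_simp
        linarith
      subst hF
      field_simp
      ring
  refine ⟨?_, ?_⟩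
  · refine (hI3.add hI4).congr (Eventually.of_forall fun r => ?_)
    exact (hkey r).symm
  · have : ∫ r, ((k + 2) * r ^ k * (v r ^ 2 / q r) * η r ^ 2
      - r ^ (k + 2) * (v r ^ 2 / q r ^ 3) * deriv η r ^ 2) ≤ 0 := by
      rw [integral_congr_ae (Eventually.of_forall hkey), integral_add hI3 hI4,
        integral_sub hI1 hI2, h2]
      linarith
    exact this

lemma ST_deriv_zero {x : ℝ} (hx : x < 0 ∨ 1 < x) : deriv Real.smoothTransition x = 0 := by
  rcases hx with hx | hx
  · have : Real.smoothTransition =ᶠ[𝓝 x] fun _ => (0:ℝ) := by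
      filter_upwards [Iio_mem_nhds hx] with y hy
      exact Real.smoothTransition.zero_of_nonpos (le_of_lt hy)
    rw [this.deriv_eq]; simp
  · have : Real.smoothTransition =ᶠ[𝓝 x] fun _ => (1:ℝ) := by
      filter_upwards [Ioi_mem_nhds hx] with y hy
      exact Real.smoothTransition.one_of_one_le (le_of_lt hy)
    rw [this.deriv_eq]; simp

lemma ST_contDiff : ContDiff ℝ (⊤ : ℕ∞) Real.smoothTransition := Real.smoothTransition.contDiff

lemma ST_deriv_cont : Continuous (deriv Real.smoothTransition) :=
  (contDiff_infty_iff_deriv.mp ST_contDiff).2.continuous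

lemma ST_hasDerivAt (x : ℝ) :
    HasDerivAt Real.smoothTransition (deriv Real.smoothTransition x) x :=
  (ST_contDiff.differentiable (by simp)).differentiableAt.hasDerivAt

lemma ST_bound : ∃ K : ℝ, 0 < K ∧ ∀ x, |x * deriv Real.smoothTransition (x - 1)| ≤ K ∧
    |x * deriv Real.smoothTransition (2 - x)| ≤ K := by
  have hc := ST_deriv_cont
  have h1 : HasCompactSupport (fun x => x * deriv Real.smoothTransition (x - 1)) := by
    refine HasCompactSupport.intro (isCompact_Icc (a := (1:ℝ)) (b := 2)) fun x hx => ?_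
    rw [ST_deriv_zero, mul_zero]
    by_contra! h
    exact hx ⟨by linarith [h.1], by linarith [h.2]⟩
  have h2 : HasCompactSupport (fun x => x * deriv Real.smoothTransition (2 - x)) := by
    refine HasCompactSupport.intro (isCompact_Icc (a := (1:ℝ)) (b := 2)) fun x hx => ?_
    rw [ST_deriv_zero, mul_zero]
    by_contra! h
    exact hx ⟨by linarith [h.2], by linarith [h.1]⟩
  obtain ⟨C1, hC1⟩ := h1.exists_bound_of_continuous (by fun_prop)
  obtain ⟨C2, hC2⟩ := h2.exists_bound_of_continuous (by fun_prop)
  refine ⟨max C1 C2 + 1, ?_, fun x => ⟨?_, ?_⟩⟩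
  · have := (norm_nonneg _).trans (hC1 0)
    have := le_max_left C1 C2
    linarith
  · have h3 := hC1 x
    have := le_max_left C1 C2
    rw [Real.norm_eq_abs] at h3
    linarith
  · have h3 := hC2 x
    have := le_max_right C1 C2
    rw [Real.norm_eq_abs] at h3
    linarith

/-- the test function `r^{-s}` cut off near `0` and near `∞` -/
def etaFun (s ε R : ℝ) (r : ℝ) : ℝ :=
  r ^ (-s) * (Real.smoothTransition (r / ε - 1) * Real.smoothTransition (2 - r / R))

lemma etaFun_zero {s ε R r : ℝ} (hε : 0 < ε) (hR : 0 < R) (hr : r ≤ ε ∨ 2 * R ≤ r) :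
    etaFun s ε R r = 0 := by
  unfold etaFun
  rcases hr with hr | hr
  · rw [Real.smoothTransition.zero_of_nonpos (x := r / ε - 1)]
    · simp
    · rw [sub_nonpos, div_le_one hε]; exact hr
  · rw [Real.smoothTransition.zero_of_nonpos (x := 2 - r / R)]
    · simp
    · rw [sub_nonpos, le_div_iff₀ hR]; exact hr

lemma etaFun_test {s ε R : ℝ} (hε : 0 < ε) (hR : 0 < R) : Test1 (etaFun s ε R) := by
  have hts : tsupport (etaFun s ε R) ⊆ Set.Icc ε (2 * R) := by
    apply closure_minimal _ isClosed_Icc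
    intro r hr
    by_contra h
    apply hr
    apply etaFun_zero hε hR
    by_contra! h'
    exact h ⟨h'.1.le, h'.2.le⟩
  refine ⟨?_, ?_, fun r hr => lt_of_lt_of_le hε (hts hr).1⟩
  · rw [contDiff_iff_contDiffAt]
    intro r
    rcases lt_or_ge r ε with hr | hr
    · refine ContDiffAt.congr_of_eventuallyEq (f := fun _ => (0 : ℝ)) contDiffAt_const ?_
      filter_upwards [Iio_mem_nhds hr] with y hy
      exact etaFun_zero hε hR (Or.inl (le_of_lt hy))
    · have hr0 : r ≠ 0 := (hε.trans_le hr).ne'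
      unfold etaFun
      have h1 : ContDiffAt ℝ (⊤ : ℕ∞) (fun r : ℝ => r ^ (-s)) r :=
        Real.contDiffAt_rpow_const_of_ne hr0
      have h2 : ContDiff ℝ (⊤ : ℕ∞) (fun r : ℝ => Real.smoothTransition (r / ε - 1)) :=
        ST_contDiff.comp ((contDiff_id.div_const ε).sub contDiff_const)
      have h3 : ContDiff ℝ (⊤ : ℕ∞) (fun r : ℝ => Real.smoothTransition (2 - r / R)) :=
        ST_contDiff.comp (contDiff_const.sub (contDiff_id.div_const R))
      exact h1.mul (h2.mul h3).contDiffAt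
  · exact HasCompactSupport.of_support_subset_isCompact isCompact_Icc (subset_closure.trans hts)

lemma etaFun_deriv_bound {s ε R K : ℝ} (hs : 0 ≤ s) (hε : 0 < ε) (hR : 0 < R)
    (hK : ∀ x, |x * deriv Real.smoothTransition (x - 1)| ≤ K ∧
      |x * deriv Real.smoothTransition (2 - x)| ≤ K) {r : ℝ} (hr : 0 < r) :
    (r * deriv (etaFun s ε R) r) ^ 2 ≤ (r ^ (-s)) ^ 2 * (s + 2 * K) ^ 2 := by
  have d1 : HasDerivAt (fun r : ℝ => r ^ (-s)) (-s * r ^ (-s - 1)) r :=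
    Real.hasDerivAt_rpow_const (Or.inl hr.ne')
  have d2 : HasDerivAt (fun r : ℝ => Real.smoothTransition (r / ε - 1))
      (deriv Real.smoothTransition (r / ε - 1) * (1 / ε)) r :=
    (ST_hasDerivAt _).comp r (((hasDerivAt_id r).div_const ε).sub_const 1)
  have d3 : HasDerivAt (fun r : ℝ => Real.smoothTransition (2 - r / R))
      (deriv Real.smoothTransition (2 - r / R) * (-(1 / R))) r :=
    (ST_hasDerivAt _).comp r (((hasDerivAt_id r).div_const R).const_sub 2)
  have hd : deriv (etaFun s ε R) r = _ := (d1.mul (d2.mul d3)).deriv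
  rw [hd, Real.rpow_sub_one hr.ne', ← mul_pow]
  apply sq_le_sq'
  all_goals
    have hb1 := abs_le.mp (hK (r / ε)).1
    have hb2 := abs_le.mp (hK (r / R)).2
    have n1 := Real.smoothTransition.nonneg (r / ε - 1)
    have n2 := Real.smoothTransition.le_one (r / ε - 1)
    have n3 := Real.smoothTransition.nonneg (2 - r / R)
    have n4 := Real.smoothTransition.le_one (2 - r / R)
    have hρ : 0 < r ^ (-s) := Real.rpow_pos_of_pos hr _
    have hKp : 0 ≤ K := (abs_nonneg _).trans (hK 0).1
    simp only [Pi.mul_apply]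
    generalize deriv Real.smoothTransition (r / ε - 1) = X at *
    generalize deriv Real.smoothTransition (2 - r / R) = Y at *
    generalize Real.smoothTransition (r / ε - 1) = A at *
    generalize Real.smoothTransition (2 - r / R) = B at *
    generalize r ^ (-s) = ρ at *
    have e : r * (-s * (ρ / r) * (A * B) + ρ * (X * (1 / ε) * B + A * (Y * -(1 / R))))
        = ρ * (- (s * (A * B)) + (r / ε * X) * B - A * (r / R * Y)) := by
      field_simp
      ring
    rw [e]
    generalize r / ε * X = X' at *
    generalize r / R * Y = Y' at *
    have hAB0 : 0 ≤ A * B := mul_nonneg n1 n3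
    have hAB1 : A * B ≤ 1 := mul_le_one₀ n2 n3 n4
    have hsAB0 : 0 ≤ s * (A * B) := mul_nonneg hs hAB0
    have hsAB1 : s * (A * B) ≤ s := mul_le_of_le_one_right hs hAB1
    have hX : |X' * B| ≤ K := by
      rw [abs_mul, abs_of_nonneg n3]
      exact mul_le_of_le_one_right (abs_nonneg _) n4 |>.trans (abs_le.mpr hb1)
    have hY : |A * Y'| ≤ K := by
      rw [abs_mul, abs_of_nonneg n1]
      exact mul_le_of_le_one_left (abs_nonneg _) n2 |>.trans (abs_le.mpr hb2)
    have hX2 := abs_le.mp hX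
    have hY2 := abs_le.mp hY
  · rw [← mul_neg]
    apply mul_le_mul_of_nonneg_left _ hρ.le
    linarith
  · apply mul_le_mul_of_nonneg_left _ hρ.le
    linarith

lemma etaFun_mid {s ε R : ℝ} (hε : 0 < ε) (hR : 0 < R) {r : ℝ} (h1 : 2 * ε < r) (h2 : r < R) :
    etaFun s ε R r = r ^ (-s) ∧ r * deriv (etaFun s ε R) r = - s * r ^ (-s) := by
  have hmid : ∀ y, 2 * ε < y → y < R → etaFun s ε R y = y ^ (-s) := by
    intro y hy1 hy2
    unfold etaFun
    rw [Real.smoothTransition.one_of_one_le, Real.smoothTransition.one_of_one_le]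
    · simp
    · have : y / R ≤ 1 := (div_le_one hR).mpr hy2.le
      linarith
    · have : 2 ≤ y / ε := (le_div_iff₀ hε).mpr hy1.le
      linarith
  have hr : 0 < r := by linarith
  refine ⟨hmid r h1 h2, ?_⟩
  have : etaFun s ε R =ᶠ[𝓝 r] fun y => y ^ (-s) := by
    filter_upwards [Ioo_mem_nhds h1 h2] with y hy using hmid y hy.1 hy.2
  rw [this.deriv_eq, (Real.hasDerivAt_rpow_const (Or.inl hr.ne')).deriv, Real.rpow_sub_one hr.ne']
  field_simp

lemma final_1d (k : ℕ) (v : ℝ → ℝ) (hv : Continuous v) (s : ℝ) (hs : 0 ≤ s) (hs2 : s ^ 2 = k + 2)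
    (hkey : ∀ η, Test1 η →
      Integrable (fun r => (k + 2) * r ^ k * (v r ^ 2 / Real.sqrt (1 + v r ^ 2)) * η r ^ 2
      - r ^ (k + 2) * (v r ^ 2 / Real.sqrt (1 + v r ^ 2) ^ 3) * deriv η r ^ 2) ∧
    ∫ r, ((k + 2) * r ^ k * (v r ^ 2 / Real.sqrt (1 + v r ^ 2)) * η r ^ 2
      - r ^ (k + 2) * (v r ^ 2 / Real.sqrt (1 + v r ^ 2) ^ 3) * deriv η r ^ 2) ≤ 0)
    (h0 : ∀ δ > 0, ∃ ε₀ > 0, ∀ r, 0 < r → r ≤ ε₀ →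
      r ^ (k + 1) * (r ^ (-s)) ^ 2 * (v r ^ 2 / Real.sqrt (1 + v r ^ 2) ^ 3) ≤ δ)
    (hinf : ∀ δ > 0, ∃ R₀ > 0, ∀ r, R₀ ≤ r →
      r ^ (k + 1) * (r ^ (-s)) ^ 2 * (v r ^ 2 / Real.sqrt (1 + v r ^ 2) ^ 3) ≤ δ) :
    ∀ r > 0, v r = 0 := by
  intro r₀ hr₀
  by_contra hne
  obtain ⟨K, hKpos, hK⟩ := ST_bound
  have hqpos : ∀ r, 0 < Real.sqrt (1 + v r ^ 2) := fun r => Real.sqrt_pos.mpr (by positivity)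
  have hqsq : ∀ r, Real.sqrt (1 + v r ^ 2) ^ 2 = 1 + v r ^ 2 := fun r => Real.sq_sqrt (by positivity)
  have hqc : Continuous fun r => Real.sqrt (1 + v r ^ 2) := by fun_prop
  set q := fun r => Real.sqrt (1 + v r ^ 2) with hq
  let D : ℝ → ℝ := fun r => (k + 2) * r ^ k * (r ^ (-s)) ^ 2 * (v r ^ 4 / q r ^ 3)
  have hD0 : ∀ r, 0 < r → 0 ≤ D r := by
    intro r hr
    have := hqpos r
    simp only [D, hq]; positivity
  have hDr : 0 < D r₀ := by
    have := hqpos r₀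
    have := Real.rpow_pos_of_pos hr₀ (-s)
    have : 0 < v r₀ ^ 4 := by positivity
    simp only [D, hq]; positivity
  have hDc : ContinuousAt D r₀ := by
    have h1 : ContinuousAt (fun r : ℝ => r ^ (-s)) r₀ :=
      Real.continuousAt_rpow_const _ _ (Or.inl hr₀.ne')
    have h2 : Continuous fun r => v r ^ 4 / q r ^ 3 :=
      (hv.pow 4).div (hqc.pow 3) (fun r => pow_ne_zero _ (hqpos r).ne')
    have h3 : Continuous fun r : ℝ => ((k:ℝ) + 2) * r ^ k := by fun_prop
    exact (h3.continuousAt.mul (h1.pow 2)).mul h2.continuousAt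
  have hev : ∀ᶠ r in 𝓝 r₀, D r₀ / 2 < D r ∧ 0 < r :=
    (hDc.eventually (lt_mem_nhds (by linarith))).and (lt_mem_nhds hr₀)
  obtain ⟨ρ, hρ, hball⟩ := Metric.eventually_nhds_iff.mp hev
  set c := D r₀ / 2 with hc
  have hcpos : 0 < c := by positivity
  set a := r₀ - ρ / 2 with ha
  set b := r₀ + ρ / 2 with hb
  have hIcc : ∀ r ∈ Set.Icc a b, c < D r ∧ 0 < r := by
    intro r hr
    apply hball
    rw [Real.dist_eq]
    exact lt_of_le_of_lt (abs_le.mpr ⟨by linarith [hr.1], by linarith [hr.2]⟩) (half_lt_self hρ)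
  have hapos : 0 < a := (hIcc a ⟨le_rfl, by linarith⟩).2
  set C := (s + 2 * K) ^ 2 with hC
  have hCpos : 0 < C := by positivity
  have hδ : 0 < c * ρ / (4 * C) := by positivity
  set δ := c * ρ / (4 * C) with hδdef
  obtain ⟨ε₀, hε₀, hA0⟩ := h0 δ hδ
  obtain ⟨R₀, hR₀, hAinf⟩ := hinf δ hδ
  obtain ⟨ε, hε, hε1, hε2⟩ : ∃ ε > 0, 2 * ε < ε₀ ∧ 2 * ε < a :=
    ⟨min ε₀ a / 3, by positivity, by linarith [min_le_left ε₀ a, lt_min hε₀ hapos],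
      by linarith [min_le_right ε₀ a, lt_min hε₀ hapos]⟩
  obtain ⟨R, hR1, hR2⟩ : ∃ R, R₀ < R ∧ b < R :=
    ⟨max R₀ b + 1, by linarith [le_max_left R₀ b], by linarith [le_max_right R₀ b]⟩
  have hR : 0 < R := hR₀.trans hR1
  have hT := etaFun_test (s := s) hε hR
  obtain ⟨hInt, hle⟩ := hkey _ hT
  set η := etaFun s ε R with hη
  let lower : ℝ → ℝ := fun r => (Set.Icc a b).indicator (fun _ => c) r
    - (Set.Icc ε (2 * ε)).indicator (fun _ => C * δ / ε) r
    - (Set.Icc R (2 * R)).indicator (fun _ => C * δ / R) r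
  have hind : ∀ x y z : ℝ, Integrable ((Set.Icc x y).indicator (fun _ => z)) := fun x y z =>
    (integrable_indicator_iff measurableSet_Icc).mpr (integrableOn_const (by simp))
  have hind2 : ∀ x y z x' y' z' : ℝ, Integrable (fun r => (Set.Icc x y).indicator (fun _ => z) r
      - (Set.Icc x' y').indicator (fun _ => z') r) := fun x y z x' y' z' =>
    (hind x y z).sub (hind x' y' z')
  have hlow : ∫ r, lower r = c * ρ - C * δ - C * δ := by
    simp only [lower]
    rw [integral_sub (hind2 _ _ _ _ _ _) (hind _ _ _), integral_sub (hind _ _ _) (hind _ _ _),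
      integral_indicator_const _ measurableSet_Icc, integral_indicator_const _ measurableSet_Icc,
      integral_indicator_const _ measurableSet_Icc]
    simp only [Real.volume_real_Icc, smul_eq_mul]
    rw [max_eq_left (by linarith), max_eq_left (by linarith), max_eq_left (by linarith)]
    have e1 : b - a = ρ := by rw [ha, hb]; ring
    rw [e1]
    field_simp
    ring
  have hlowint : Integrable lower := ((hind _ _ _).sub (hind _ _ _)).sub (hind _ _ _)
  have hbad : ∀ r, 0 < r → ∀ x, 0 < x → x ≤ r →
      r ^ (k + 1) * (r ^ (-s)) ^ 2 * (v r ^ 2 / q r ^ 3) ≤ δ →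
      -(C * δ / x) ≤ (k + 2) * r ^ k * (v r ^ 2 / q r) * η r ^ 2
      - r ^ (k + 2) * (v r ^ 2 / q r ^ 3) * deriv η r ^ 2 := by
    intro r hr x hx hxr hA
    have hqr : 0 < q r := hqpos r
    have h1 : 0 ≤ (k + 2) * r ^ k * (v r ^ 2 / q r) * η r ^ 2 := by positivity
    have h2 := etaFun_deriv_bound hs hε hR hK hr (s := s)
    have h3 : r ^ (k + 2) * (v r ^ 2 / q r ^ 3) * deriv η r ^ 2
        = r ^ k * (v r ^ 2 / q r ^ 3) * (r * deriv η r) ^ 2 := by ring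
    have h4 : r ^ k * (v r ^ 2 / q r ^ 3) * (r * deriv η r) ^ 2
        ≤ r ^ k * (v r ^ 2 / q r ^ 3) * ((r ^ (-s)) ^ 2 * C) := by
      gcongr
    have h5 : r ^ k * (v r ^ 2 / q r ^ 3) * ((r ^ (-s)) ^ 2 * C)
        = C * (r ^ (k + 1) * (r ^ (-s)) ^ 2 * (v r ^ 2 / q r ^ 3)) / r := by
      field_simp
      ring
    have h6 : C * (r ^ (k + 1) * (r ^ (-s)) ^ 2 * (v r ^ 2 / q r ^ 3)) / r ≤ C * δ / x := by
      gcongr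
    linarith
  have hpt : ∀ r, lower r ≤ (k + 2) * r ^ k * (v r ^ 2 / q r) * η r ^ 2
      - r ^ (k + 2) * (v r ^ 2 / q r ^ 3) * deriv η r ^ 2 := by
    intro r
    have hCε : 0 ≤ C * δ / ε := by positivity
    have hCR : 0 ≤ C * δ / R := by positivity
    have hout : ε ≤ r ∧ r ≤ 2 * R ∨ (r < ε ∨ 2 * R < r) := by
      by_contra! h
      have := h.1 h.2.1
      linarith [h.2.2]
    have hab : a < b := by rw [ha, hb]; linarith
    rcases hout with ⟨hr1, hr2⟩ | hout
    · have hr : 0 < r := hε.trans_le hr1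
      rcases le_or_gt r (2 * ε) with h1 | h1
      · have hA := hbad r hr ε hε hr1 (hA0 r hr (by linarith))
        have i1 : r ∉ Set.Icc a b := fun h => by linarith [h.1]
        have i2 : r ∈ Set.Icc ε (2 * ε) := ⟨hr1, h1⟩
        have i3 : r ∉ Set.Icc R (2 * R) := fun h => by linarith [h.1]
        simp only [lower, Set.indicator_of_notMem i1, Set.indicator_of_mem i2,
          Set.indicator_of_notMem i3]
        linarith
      · rcases le_or_gt R r with h2 | h2
        · have hA := hbad r hr R hR h2 (hAinf r (by linarith))
          have i1 : r ∉ Set.Icc a b := fun h => by linarith [h.2]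
          have i2 : r ∉ Set.Icc ε (2 * ε) := fun h => by linarith [h.2]
          have i3 : r ∈ Set.Icc R (2 * R) := ⟨h2, hr2⟩
          simp only [lower, Set.indicator_of_notMem i1, Set.indicator_of_notMem i2,
            Set.indicator_of_mem i3]
          linarith
        · obtain ⟨m1, m2⟩ := etaFun_mid (s := s) hε hR h1 h2
          have i2 : r ∉ Set.Icc ε (2 * ε) := fun h => by linarith [h.2]
          have i3 : r ∉ Set.Icc R (2 * R) := fun h => by linarith [h.1]
          have hQD : (k + 2) * r ^ k * (v r ^ 2 / q r) * η r ^ 2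
              - r ^ (k + 2) * (v r ^ 2 / q r ^ 3) * deriv η r ^ 2 = D r := by
            have h3 : r ^ (k + 2) * (v r ^ 2 / q r ^ 3) * deriv η r ^ 2
              = r ^ k * (v r ^ 2 / q r ^ 3) * (r * deriv η r) ^ 2 := by ring
            rw [h3, hη, m1, m2]
            have hqr : 0 < q r := hqpos r
            have hqs : q r ^ 2 = 1 + v r ^ 2 := hqsq r
            simp only [D]
            generalize q r = Z at *
            rw [mul_pow, neg_sq, hs2]
            field_simp
            rw [hqs]; ring
          rw [hQD]
          simp only [lower, Set.indicator_of_notMem i2, Set.indicator_of_notMem i3]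
          by_cases i1 : r ∈ Set.Icc a b
          · rw [Set.indicator_of_mem i1]
            linarith [(hIcc r i1).1]
          · rw [Set.indicator_of_notMem i1]
            linarith [hD0 r hr]
    · have hz : η r = 0 := etaFun_zero hε hR (hout.imp le_of_lt le_of_lt)
      have hz' : deriv η r = 0 := by
        have : η =ᶠ[𝓝 r] fun _ => (0:ℝ) := by
          rcases hout with h | h
          · filter_upwards [Iio_mem_nhds h] with y hy
            exact etaFun_zero hε hR (Or.inl (le_of_lt hy))
          · filter_upwards [Ioi_mem_nhds h] with y hy
            exact etaFun_zero hε hR (Or.inr (le_of_lt hy))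
        rw [this.deriv_eq]; simp
      have i1 : r ∉ Set.Icc a b := fun h => by
        rcases hout with h' | h'
        · linarith [h.1]
        · linarith [h.2]
      rw [hz, hz']
      simp only [lower, Set.indicator_of_notMem i1]
      have j1 : 0 ≤ (Set.Icc ε (2 * ε)).indicator (fun _ => C * δ / ε) r :=
        Set.indicator_nonneg (fun _ _ => hCε) _
      have j2 : 0 ≤ (Set.Icc R (2 * R)).indicator (fun _ => C * δ / R) r :=
        Set.indicator_nonneg (fun _ _ => hCR) _
      simp only [ne_eq, OfNat.ofNat_ne_zero, not_false_eq_true, zero_pow, mul_zero, sub_zero]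
      linarith
  have hfin := integral_mono hlowint hInt hpt
  rw [hlow] at hfin
  have hCδ : C * δ = c * ρ / 4 := by rw [hδdef]; field_simp
  have : 0 < c * ρ := by positivity
  linarith

lemma w_le_sq (t : ℝ) : t ^ 2 / Real.sqrt (1 + t ^ 2) ^ 3 ≤ t ^ 2 := by
  apply div_le_self (sq_nonneg t)
  apply one_le_pow₀
  rw [Real.one_le_sqrt]
  nlinarith [sq_nonneg t]

lemma w_le_inv (t : ℝ) : t ^ 2 / Real.sqrt (1 + t ^ 2) ^ 3 ≤ |t|⁻¹ := by
  by_cases ht : t = 0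
  · simp [ht]
  · have h1 : 0 < |t| := abs_pos.mpr ht
    have h2 : |t| ≤ Real.sqrt (1 + t ^ 2) := by
      apply Real.le_sqrt_of_sq_le
      rw [sq_abs]; linarith
    calc t ^ 2 / Real.sqrt (1 + t ^ 2) ^ 3 ≤ t ^ 2 / |t| ^ 3 := by gcongr
      _ = |t|⁻¹ := by
        rw [← sq_abs]; field_simp

lemma small_at_zero (k : ℕ) (v : ℝ → ℝ) (hv : DifferentiableAt ℝ v 0) (hv0 : v 0 = 0)
    (s : ℝ) (hs : 1 < s) (hs2 : s ^ 2 = k + 2) :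
    ∀ δ > 0, ∃ ε₀ > 0, ∀ r, 0 < r → r ≤ ε₀ →
      r ^ (k + 1) * (r ^ (-s)) ^ 2 * (v r ^ 2 / Real.sqrt (1 + v r ^ 2) ^ 3) ≤ δ := by
  intro δ hδ
  obtain ⟨L, hL⟩ := hv.hasDerivAt.isBigO_sub.bound
  simp only [hv0, sub_zero, Real.norm_eq_abs] at hL
  have hp : 0 < (k:ℝ) + 3 - 2 * s := by nlinarith
  have hc : ContinuousAt (fun r : ℝ => L ^ 2 * r ^ ((k:ℝ) + 3 - 2 * s)) 0 :=
    continuousAt_const.mul (Real.continuousAt_rpow_const _ _ (Or.inr hp.le))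
  have h0 : L ^ 2 * (0:ℝ) ^ ((k:ℝ) + 3 - 2 * s) = 0 := by
    rw [Real.zero_rpow hp.ne', mul_zero]
  have hev : ∀ᶠ r in 𝓝 (0:ℝ), L ^ 2 * r ^ ((k:ℝ) + 3 - 2 * s) < δ :=
    hc.eventually (gt_mem_nhds (lt_of_eq_of_lt h0 hδ))
  obtain ⟨ρ, hρ, hball⟩ := Metric.eventually_nhds_iff.mp (hL.and hev)
  refine ⟨ρ / 2, by positivity, fun r hr hr2 => ?_⟩
  obtain ⟨h1, h2⟩ := hball (y := r) (by
    rw [Real.dist_eq, sub_zero, abs_of_pos hr]; linarith)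
  refine le_trans ?_ h2.le
  have h3 : v r ^ 2 ≤ L ^ 2 * r ^ 2 := by
    rw [← sq_abs, ← sq_abs r, ← mul_pow]
    exact pow_le_pow_left₀ (abs_nonneg _) h1 2
  have h4 : r ^ ((k:ℝ) + 3 - 2 * s) = r ^ (k + 3) * (r ^ (-s)) ^ 2 := by
    rw [← Real.rpow_natCast r (k + 3), ← Real.rpow_natCast (r ^ (-s)) 2, ← Real.rpow_mul hr.le,
      ← Real.rpow_add hr]
    congr 1
    push_cast; ring
  calc r ^ (k + 1) * (r ^ (-s)) ^ 2 * (v r ^ 2 / Real.sqrt (1 + v r ^ 2) ^ 3)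
      ≤ r ^ (k + 1) * (r ^ (-s)) ^ 2 * (L ^ 2 * r ^ 2) := by
        have := (w_le_sq (v r)).trans h3
        gcongr
    _ = L ^ 2 * r ^ ((k:ℝ) + 3 - 2 * s) := by rw [h4]; ring

lemma small_at_top (k : ℕ) (w : ℝ → ℝ) (s : ℝ)
    (h : ∀ δ > 0, ∀ᶠ r in atTop, w r ≤ δ * r ^ (-(k:ℝ) - 1 + 2 * s)) :
    ∀ δ > 0, ∃ R₀ > 0, ∀ r, R₀ ≤ r → r ^ (k + 1) * (r ^ (-s)) ^ 2 * w r ≤ δ := by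
  intro δ hδ
  obtain ⟨R, hR⟩ := eventually_atTop.mp (h δ hδ)
  refine ⟨max R 1, by positivity, fun r hr => ?_⟩
  have hr0 : 0 < r := lt_of_lt_of_le one_pos ((le_max_right _ _).trans hr)
  have h1 := hR r ((le_max_left _ _).trans hr)
  have h4 : r ^ (k + 1) * (r ^ (-s)) ^ 2 * r ^ (-(k:ℝ) - 1 + 2 * s) = 1 := by
    rw [← Real.rpow_natCast r (k + 1), ← Real.rpow_natCast (r ^ (-s)) 2, ← Real.rpow_mul hr0.le,
      ← Real.rpow_add hr0, ← Real.rpow_add hr0]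
    have h5 : ((k + 1 : ℕ) : ℝ) + -s * ((2 : ℕ) : ℝ) + (-(k:ℝ) - 1 + 2 * s) = 0 := by
      push_cast; ring
    rw [h5, Real.rpow_zero]
  calc r ^ (k + 1) * (r ^ (-s)) ^ 2 * w r
      ≤ r ^ (k + 1) * (r ^ (-s)) ^ 2 * (δ * r ^ (-(k:ℝ) - 1 + 2 * s)) := by gcongr
    _ = δ * (r ^ (k + 1) * (r ^ (-s)) ^ 2 * r ^ (-(k:ℝ) - 1 + 2 * s)) := by ring
    _ = δ := by rw [h4, mul_one]

/-- **Theorem (Liouville theorem for radial stable solutions, `n ≥ 7`).**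
Let `n ≥ 7`, `f ∈ C¹(ℝ)` and let `u` be a `W^{3,1}_loc(ℝⁿ)` stable solution of
`div(∇u/√(1+|∇u|²)) = -f(u)` in `ℝⁿ`, radially symmetric with respect to the origin.
If either `|∇u(x)| = o(|x|^{-n/2+√(n-1)+1})` or `|∇u(x)|⁻¹ = o(|x|^{-n+2√(n-1)+2})`
as `|x| → ∞`, then `u` is constant. -/
theorem stmt_8 (n : ℕ) (hn : 7 ≤ n) (f : ℝ → ℝ) (u : Euc n → ℝ) (g : ℝ → ℝ)
    (hf : ContDiff ℝ 1 f)
    (hreg : ContDiff ℝ 3 u)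
    (hstable : IsStableSolution (Set.univ : Set (Euc n)) f u)
    (hradial : ∀ x : Euc n, u x = g ‖x‖)
    (hgrowth :
      ((fun x : Euc n => ‖gradient u x‖) =o[cobounded (Euc n)]
        fun x : Euc n => ‖x‖ ^ (-(n:ℝ)/2 + Real.sqrt ((n:ℝ) - 1) + 1)) ∨
      ((fun x : Euc n => ‖gradient u x‖⁻¹) =o[cobounded (Euc n)]
        fun x : Euc n => ‖x‖ ^ (-(n:ℝ) + 2 * Real.sqrt ((n:ℝ) - 1) + 2))) :
    ∃ c₀ : ℝ, ∀ x : Euc n, u x = c₀ := by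
  obtain ⟨k, rfl⟩ : ∃ k, n = k + 3 := ⟨n - 3, by omega⟩
  let e : Euc (k + 3) := EuclideanSpace.single 0 1
  have he : ‖e‖ = 1 := by simp [e]
  let G : ℝ → ℝ := fun t => u (t • e)
  have hG3 : ContDiff ℝ 3 G := hreg.comp (contDiff_id.smul contDiff_const)
  have hG2 : ContDiff ℝ 2 G := hG3.of_le (by norm_num)
  have hGd : Differentiable ℝ G := hG2.differentiable (by simp)
  have hGg : ∀ t, G t = g |t| := by
    intro t
    simp only [G, hradial, norm_smul, he, Real.norm_eq_abs, mul_one]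
  have hu : u = fun x => G ‖x‖ := by
    ext x
    rw [hGg, hradial, abs_of_nonneg (norm_nonneg x)]
  rw [hu] at hstable
  have hkey := key_1d k f G hf hG2 (weak_1d rfl f G hGd hstable) (stab_1d rfl f G hGd hstable)
  have hv : ContDiff ℝ 1 (deriv G) := by
    have := (contDiff_succ_iff_deriv (n := 1)).mp (by simpa [one_add_one_eq_two] using hG2)
    exact this.2.2
  have hv0 : deriv G 0 = 0 := by
    have h1 : HasDerivAt G (deriv G 0) (-0) := by
      rw [neg_zero]; exact (hGd 0).hasDerivAt
    have h2 : HasDerivAt (fun t => G (-t)) (deriv G 0 * (-1)) 0 := h1.comp 0 (hasDerivAt_neg (0:ℝ))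
    have h3 : (fun t => G (-t)) = G := by
      ext t; simp [hGg]
    rw [h3] at h2
    have h6 := h2.deriv
    linarith
  set s : ℝ := Real.sqrt (((k + 3 : ℕ) : ℝ) - 1) with hs
  have hcast : (((k + 3 : ℕ) : ℝ) - 1) = k + 2 := by push_cast; ring
  have hs2 : s ^ 2 = k + 2 := by
    rw [hs, hcast, Real.sq_sqrt (by positivity)]
  have hs1 : 1 < s := by
    rw [hs, hcast]
    apply Real.lt_sqrt_of_sq_lt
    linarith [(Nat.cast_nonneg k : (0:ℝ) ≤ k)]
  have hz := small_at_zero k (deriv G) ((hv.differentiable (by simp)) 0) hv0 s hs1 hs2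
  have hray : Tendsto (fun r : ℝ => r • e) atTop (cobounded (Euc (k + 3))) := by
    rw [← tendsto_norm_atTop_iff_cobounded]
    simp only [norm_smul, he, mul_one, Real.norm_eq_abs]
    exact tendsto_abs_atTop_atTop
  have hnorm : ∀ r : ℝ, 0 < r → ‖r • e‖ = r := fun r hr => by
    rw [norm_smul, he, mul_one, Real.norm_eq_abs, abs_of_pos hr]
  have hgr : ∀ r : ℝ, 0 < r → ‖gradient u (r • e)‖ = |deriv G r| := by
    intro r hr
    have hne : r • e ≠ 0 := norm_ne_zero_iff.mp (by rw [hnorm r hr]; exact hr.ne')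
    rw [hu, grad_radial G (deriv G ‖r • e‖) _ hne (hGd _).hasDerivAt, norm_smul, hnorm r hr,
      Real.norm_eq_abs, abs_mul, abs_of_pos (inv_pos.mpr hr), mul_assoc, inv_mul_cancel₀ hr.ne',
      mul_one]
  have hi := small_at_top k
    (fun r => deriv G r ^ 2 / Real.sqrt (1 + deriv G r ^ 2) ^ 3) s (by
      intro δ hδ
      rcases hgrowth with h | h
      · have h1 := (h.comp_tendsto hray).bound (Real.sqrt_pos.mpr hδ)
        filter_upwards [h1, eventually_gt_atTop 0] with r hr hr0
        simp only [Function.comp_apply, hgr r hr0, hnorm r hr0] at hr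
        rw [Real.norm_eq_abs, Real.norm_eq_abs, abs_abs,
          abs_of_pos (Real.rpow_pos_of_pos hr0 _)] at hr
        refine (w_le_sq _).trans ?_
        rw [← sq_abs]
        refine (pow_le_pow_left₀ (abs_nonneg _) hr 2).trans (le_of_eq ?_)
        rw [mul_pow, Real.sq_sqrt hδ.le, ← Real.rpow_natCast (r ^ _) 2, ← Real.rpow_mul hr0.le]
        congr 2
        push_cast; ring
      · have h1 := (h.comp_tendsto hray).bound hδ
        filter_upwards [h1, eventually_gt_atTop 0] with r hr hr0
        simp only [Function.comp_apply, hgr r hr0, hnorm r hr0] at hr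
        rw [Real.norm_eq_abs, Real.norm_eq_abs, abs_of_nonneg (inv_nonneg.mpr (abs_nonneg _)),
          abs_of_pos (Real.rpow_pos_of_pos hr0 _)] at hr
        refine (w_le_inv _).trans (hr.trans (le_of_eq ?_))
        congr 2
        push_cast; ring)
  have hfin := final_1d k (deriv G) hv.continuous s (by linarith) hs2 hkey hz hi
  have hall : ∀ r : ℝ, deriv G r = 0 ∨ r < 0 := by
    intro r
    rcases lt_trichotomy r 0 with h | h | h
    · exact Or.inr h
    · left; rw [h]; exact hv0
    · left; exact hfin r h
  refine ⟨G 0, fun x => ?_⟩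
  have h1 := Convex.norm_image_sub_le_of_norm_deriv_le (f := G) (s := Set.Ici 0) (x := 0) (y := ‖x‖)
    (C := 0) (fun r _ => hGd r)
    (fun r hr => by
      rcases hall r with h | h
      · rw [h]; simp
      · exact absurd hr (not_le.mpr h))
    (convex_Ici _) Set.self_mem_Ici (norm_nonneg x)
  rw [zero_mul, norm_le_zero_iff, sub_eq_zero] at h1
  rw [← h1, hu]
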